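/- For any d ∈ ℕ and x ∈ 𝒜_d, the sum Σ_{i=2}^d K(x_i, Y_i) possesses a density q_x^d, where Y₂,…,Y_d are independent with Y_i ~ N(x_i, l²/d). Moreover, there exists a constant C_K such that ‖q_x^d‖_∞ ≤ C_K for all d ∈ ℕ and all x ∈ 𝒜_d. -/

import Mathlib

/-!
The sum `F(Y) = Σ K(xᵢ, Yᵢ)` is a function of a Gaussian vector `Y = x + σ ξ`, where `σ = l / √d`
and `ξ` is standard normal in `ℝ^d`. When `xᵢ ∈ A`, the condition `|(log ρ)''| < ((log ρ)')²` makes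
the cubic `K(xᵢ, ·)` strictly monotone, in the direction given by the sign of `(log ρ)'(xᵢ)`, with
slope at least `3 / (4 c)` in absolute value (`cubic_increment`).

Let `S` be the set of indices `i ≥ 2` with `xᵢ ∈ A`, let `n` be its cardinality, and let `u` be the
unit vector with coordinates `± 1 / √n` on `S` (the signs being those of `(log ρ)'(xᵢ)`) and `0`
elsewhere. Along `u`, the function `ξ ↦ F(x + σ ξ)` increases at rate at least `(3 / (4 c)) σ √n`.
The standard Gaussian law is rotation invariant, so `u` may be taken as the first vector of an
orthonormal basis in which the coordinates of `ξ` are independent standard normals. Conditionally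
on the other coordinates, `F` is then an expanding function of a single standard normal variable,
and its law is bounded by Lebesgue measure divided by the rate (`pi_gaussian_preimage_le`).
As `n ≥ ρ(A) (d - 1) / 2 ≥ ρ(A) d / 4` on the typical set, the rate is bounded below independently
of `d` and `x`. A Radon-Nikodym derivative is the required density (`exists_bounded_density`).
-/

open MeasureTheory ProbabilityTheory Filter Set

noncomputable section

/-- The exponentially-weighted sup-norm `‖g‖_{∞,s} = sup_x e^{-s|x|} |g x|`. -/
def normIS (g : ℝ → ℝ) (s : ℝ) : ℝ := ⨆ x : ℝ, Real.exp (-(s * |x|)) * |g x|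

/-- Membership in the space `Sⁿ`: `n`-times continuously differentiable with all
iterated derivatives up to order `n` of sub-exponential growth. -/
def MemS (n : ℕ) (g : ℝ → ℝ) : Prop :=
  ContDiff ℝ n g ∧ ∀ s > (0:ℝ), ∀ i ≤ n,
    BddAbove (Set.range fun x => Real.exp (-(s * |x|)) * |iteratedDeriv i g x|)

/-- A positive sequence is sluggish if it tends to infinity but `a d / √(log d)` stays bounded. -/
def Sluggish (a : ℕ → ℝ) : Prop :=
  (∀ d, 0 < a d) ∧ Tendsto a atTop atTop ∧
    ∃ M : ℝ, ∀ d : ℕ, 2 ≤ d → a d / Real.sqrt (Real.log d) ≤ M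

/-- `(log ρ)'` -/
def dl (ρ : ℝ → ℝ) : ℝ → ℝ := deriv fun x => Real.log (ρ x)

/-- `(log ρ)''` -/
def d2l (ρ : ℝ → ℝ) : ℝ → ℝ := deriv (dl ρ)

/-- `ρ(g) = ∫ g dρ` -/
def rhoE (ρ g : ℝ → ℝ) : ℝ := ∫ x, g x * ρ x

/-- `J = ρ(((log ρ)')²)` -/
def Jc (ρ : ℝ → ℝ) : ℝ := rhoE ρ fun x => (dl ρ x) ^ 2

/-- super-exponential tails: `(x/|x|)·(log ρ)'(x) → -∞` as `|x| → ∞`. -/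
def SuperExpTails (ρ : ℝ → ℝ) : Prop :=
  Tendsto (dl ρ) atTop atBot ∧ Tendsto (dl ρ) atBot atTop

/-- standard normal CDF -/
def stdCDF (t : ℝ) : ℝ := ((gaussianReal 0 1) (Set.Iic t)).toReal

/-- the constant `h(l) = 2l²Φ(-l√J/2)` -/
def hc (ρ : ℝ → ℝ) (l : ℝ) : ℝ := 2 * l ^ 2 * stdCDF (-(l * Real.sqrt (Jc ρ)) / 2)

/-- the limiting (Langevin) generator `G f = (h(l)/2)(f'' + (log ρ)' f')` -/
def Gop (ρ : ℝ → ℝ) (l : ℝ) (f : ℝ → ℝ) (x : ℝ) : ℝ :=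
  hc ρ l / 2 * (deriv (deriv f) x + dl ρ x * deriv f x)

/-- the product measure `ρ_d` on `ℝ^d` -/
def pm (ρ : ℝ → ℝ) (d : ℕ) : Measure (Fin d → ℝ) :=
  Measure.pi fun _ => volume.withDensity fun x => ENNReal.ofReal (ρ x)

/-- law of the proposal `Y ~ N(x, l²/d · I_d)` -/
def gaussPi (l : ℝ) (d : ℕ) (x : Fin d → ℝ) : Measure (Fin d → ℝ) :=
  Measure.pi fun i => gaussianReal (x i) ((l ^ 2 / (d:ℝ)).toNNReal)

/-- the RWM generator `G_d` -/
def Gd (ρ : ℝ → ℝ) (l : ℝ) (d : ℕ) [NeZero d] (f : ℝ → ℝ) (x : Fin d → ℝ) : ℝ :=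
  (d:ℝ) * ∫ y, (f (y 0) - f (x 0)) * min 1 ((∏ i, ρ (y i)) / ∏ i, ρ (x i)) ∂(gaussPi l d x)

/-- the set `A` associated with the constant `c_A` -/
def Aset (ρ : ℝ → ℝ) (c : ℝ) : Set ℝ :=
  {x | |d2l ρ x| < (dl ρ x) ^ 2 ∧ 1 / c < |dl ρ x| ∧ |dl ρ x| < c}

/-- indices `2,…,d` (all coordinates except the first) -/
def restIdx (d : ℕ) : Finset (Fin d) := Finset.univ.filter fun i => (i : ℕ) ≠ 0

/-- the typical sets `𝒜_d` -/
def Ad (ρ : ℝ → ℝ) (c : ℝ) (a : ℕ → ℝ) (d : ℕ) : Set (Fin d → ℝ) :=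
  {x | (1 / ((d : ℝ) - 1)) * ∑ i ∈ restIdx d, Real.exp |x i| < 2 * rhoE ρ (fun t => Real.exp |t|)
    ∧ (∫ t in Aset ρ c, ρ t) / 2 <
        (1 / ((d : ℝ) - 1)) * ∑ i ∈ restIdx d, (Aset ρ c).indicator (fun _ => (1:ℝ)) (x i)
    ∧ (1 / ((d : ℝ) - 1)) * |∑ i ∈ restIdx d, ((dl ρ (x i)) ^ 2 - Jc ρ)| <
        a d / Real.sqrt d * Real.sqrt (3 * rhoE ρ fun t => ((dl ρ t) ^ 2 - Jc ρ) ^ 2)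
    ∧ (1 / ((d : ℝ) - 1)) * |∑ i ∈ restIdx d, (d2l ρ (x i) + Jc ρ)| <
        a d / Real.sqrt d * Real.sqrt (3 * rhoE ρ fun t => (d2l ρ t + Jc ρ) ^ 2)}

/-- `K(x,y)` -/
def Kf (ρ : ℝ → ℝ) (c : ℝ) (x y : ℝ) : ℝ :=
  dl ρ x * (y - x) + d2l ρ x / 2 * (y - x) ^ 2
    + (dl ρ x) ^ 3 * (Aset ρ c).indicator (fun _ => (1:ℝ)) x / 3 * (y - x) ^ 3

/-- `Σ_{i=2}^d K(x_i, Y_i)` -/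
def SK (ρ : ℝ → ℝ) (c : ℝ) (d : ℕ) (x Y : Fin d → ℝ) : ℝ :=
  ∑ i ∈ restIdx d, Kf ρ c (x i) (Y i)

/-- `β(x,y)` -/
def betaF (ρ : ℝ → ℝ) (c l : ℝ) (d : ℕ) [NeZero d] (x : Fin d → ℝ) (y : ℝ) : ℝ :=
  ∫ Y, min 1 (Real.exp (dl ρ (x 0) * (y - x 0) + SK ρ c d x Y)) ∂(gaussPi l d x)

/-- `G̃_d` -/
def tGd (ρ : ℝ → ℝ) (c l : ℝ) (d : ℕ) [NeZero d] (f : ℝ → ℝ) (x : Fin d → ℝ) : ℝ :=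
  (d:ℝ) * ∫ y, (f y - f (x 0)) * betaF ρ c l d x y
    ∂(gaussianReal (x 0) ((l ^ 2 / (d:ℝ)).toNNReal))

/-- `Ĝ_d` -/
def hGd (ρ : ℝ → ℝ) (c l : ℝ) (d : ℕ) [NeZero d] (f : ℝ → ℝ) (x : Fin d → ℝ) : ℝ :=
  l ^ 2 / 2 * deriv (deriv f) (x 0) * (∫ Y, min 1 (Real.exp (SK ρ c d x Y)) ∂(gaussPi l d x))
    + l ^ 2 * deriv f (x 0) * dl ρ (x 0) *
      (∫ Y, (Set.Iio (0:ℝ)).indicator Real.exp (SK ρ c d x Y) ∂(gaussPi l d x))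

/-- `𝒩(x,Y)` -/
def Nf (ρ : ℝ → ℝ) (l : ℝ) (d : ℕ) (x Y : Fin d → ℝ) : ℝ :=
  l ^ 2 / (2 * (d:ℝ)) * ∑ i ∈ restIdx d, d2l ρ (x i)
    + ∑ i ∈ restIdx d, dl ρ (x i) * (Y i - x i)

/-- `Ğ_d` -/
def bGd (ρ : ℝ → ℝ) (l : ℝ) (d : ℕ) [NeZero d] (f : ℝ → ℝ) (x : Fin d → ℝ) : ℝ :=
  l ^ 2 / 2 * deriv (deriv f) (x 0) * (∫ Y, min 1 (Real.exp (Nf ρ l d x Y)) ∂(gaussPi l d x))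
    + l ^ 2 * deriv f (x 0) * dl ρ (x 0) *
      (∫ Y, (Set.Iio (0:ℝ)).indicator Real.exp (Nf ρ l d x Y) ∂(gaussPi l d x))

/-! ### Gaussian measures and expanding functions -/

lemma gaussianReal_std_le_volume (E : Set ℝ) : gaussianReal 0 1 E ≤ volume E := by
  rw [gaussianReal_apply _ one_ne_zero]
  calc ∫⁻ x in E, gaussianPDF 0 1 x ≤ ∫⁻ _ in E, 1 := by
        refine lintegral_mono fun x => ?_
        rw [gaussianPDF, ENNReal.ofReal_le_one, gaussianPDFReal]
        have h1 : (√(2 * Real.pi * ((1 : NNReal) : ℝ)))⁻¹ ≤ 1 := by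
          apply inv_le_one_of_one_le₀
          rw [Real.one_le_sqrt, NNReal.coe_one]
          linarith [Real.pi_gt_three]
        have h2 : Real.exp (-(x - 0) ^ 2 / (2 * ((1 : NNReal) : ℝ))) ≤ 1 := by
          rw [Real.exp_le_one_iff, NNReal.coe_one]
          nlinarith [sq_nonneg x]
        exact mul_le_one₀ h1 (Real.exp_pos _).le h2
    _ = volume E := by simp

/-- An expanding function of the line shrinks preimages: it is antilipschitz. -/
lemma volume_preimage_le_of_expanding {φ : ℝ → ℝ} {m : ℝ} (hm : 0 < m)
    (h : ∀ s t, s ≤ t → m * (t - s) ≤ φ t - φ s) (E : Set ℝ) :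
    volume (φ ⁻¹' E) ≤ ENNReal.ofReal (1 / m) * volume E := by
  have hanti : AntilipschitzWith (Real.toNNReal (1 / m)) φ := by
    refine AntilipschitzWith.of_le_mul_dist fun s t => ?_
    rw [Real.coe_toNNReal _ (by positivity), Real.dist_eq, Real.dist_eq, one_div,
      ← div_eq_inv_mul, le_div_iff₀ hm]
    rcases le_total s t with hst | hst
    · have := h s t hst
      rw [abs_sub_comm, abs_of_nonneg (by linarith), abs_sub_comm]
      exact le_trans (by linarith) (le_abs_self _)
    · have := h t s hst
      rw [abs_of_nonneg (by linarith)]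
      exact le_trans (by linarith) (le_abs_self _)
  have := hanti.hausdorffMeasure_preimage_le (d := 1) zero_le_one E
  rw [hausdorffMeasure_real, ENNReal.rpow_one] at this
  exact this

/-- A function of a standard Gaussian vector that expands at rate `m` along one unit direction `u`
has a law bounded by `1 / m` times Lebesgue measure: rotate `u` to a coordinate axis and condition
on the other coordinates. -/
lemma pi_gaussian_preimage_le {n : ℕ} {F : (Fin (n + 1) → ℝ) → ℝ} (hF : Measurable F)
    {u : EuclideanSpace ℝ (Fin (n + 1))} (hu : ‖u‖ = 1) {m : ℝ} (hm : 0 < m)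
    (h : ∀ (z : Fin (n + 1) → ℝ) (s t : ℝ), s ≤ t →
      m * (t - s) ≤ F (fun i => z i + t * u i) - F (fun i => z i + s * u i))
    {E : Set ℝ} (hE : MeasurableSet E) :
    (Measure.pi fun _ : Fin (n + 1) => gaussianReal 0 1) (F ⁻¹' E)
      ≤ ENNReal.ofReal (1 / m) * volume E := by
  have horth : Orthonormal ℝ (({0} : Set (Fin (n + 1))).domRestrict fun _ => u) := by
    refine ⟨fun _ => hu, fun i j hij => ?_⟩
    exact absurd (Subsingleton.elim i j) hij
  obtain ⟨b, hb⟩ := horth.exists_orthonormalBasis_extension_of_card_eq (by simp)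
  have hb0 : b 0 = u := hb 0 rfl
  set P := Measure.pi fun _ : Fin (n + 1) => gaussianReal 0 1 with hP
  have hrot : P.map (WithLp.toLp 2) =
      P.map (fun x => ∑ i, x i • b i : _ → EuclideanSpace ℝ (Fin (n + 1))) := by
    rw [hP, map_pi_eq_stdGaussian, stdGaussian_eq_map_pi_orthonormalBasis b]
  let G : EuclideanSpace ℝ (Fin (n + 1)) → ℝ := fun z => F (WithLp.ofLp z)
  have hG : Measurable G := hF.comp (by fun_prop)
  have h1 : P (F ⁻¹' E) = P ((fun x => G (∑ i, x i • b i)) ⁻¹' E) := by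
    have e1 : P.map (WithLp.toLp 2) (G ⁻¹' E) = P (F ⁻¹' E) := by
      rw [Measure.map_apply (by fun_prop) (hG hE)]
      rfl
    rw [← e1, hrot, Measure.map_apply (by fun_prop) (hG hE)]
    rfl
  have hmeas : Measurable (fun x : Fin (n + 1) → ℝ => G (∑ i, x i • b i)) :=
    hG.comp (by fun_prop)
  have hmp := (measurePreserving_piFinSuccAbove
    (fun _ : Fin (n + 1) => gaussianReal 0 1) 0).symm
  rw [h1, hP, ← hmp.measure_preimage (hmeas hE).nullMeasurableSet,
    Measure.prod_apply_symm (hmp.measurable (hmeas hE))]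
  have key : ∀ y : Fin n → ℝ, gaussianReal 0 1 ((fun t => (t, y)) ⁻¹'
      ((MeasurableEquiv.piFinSuccAbove (fun _ : Fin (n + 1) => ℝ) 0).symm ⁻¹'
        ((fun x => G (∑ i, x i • b i)) ⁻¹' E))) ≤ ENNReal.ofReal (1 / m) * volume E := by
    intro y
    refine (gaussianReal_std_le_volume _).trans ?_
    refine volume_preimage_le_of_expanding (φ := fun t => G (∑ i,
      (MeasurableEquiv.piFinSuccAbove (fun _ : Fin (n + 1) => ℝ) 0).symm (t, y) i • b i))
      hm (fun s t hst => ?_) E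
    have hval : ∀ t : ℝ, G (∑ i,
        (MeasurableEquiv.piFinSuccAbove (fun _ : Fin (n + 1) => ℝ) 0).symm (t, y) i • b i)
        = F (fun i => (∑ j, y j • b j.succ) i + t * u i) := by
      intro t
      show F _ = F _
      congr 1
      ext i
      simp [Fin.sum_univ_succ, MeasurableEquiv.piFinSuccAbove_symm_apply, Fin.insertNthEquiv,
        hb0, add_comm]
    rw [hval, hval]
    exact h _ s t hst
  calc _ ≤ ∫⁻ _ : Fin n → ℝ, ENNReal.ofReal (1 / m) * volume E
          ∂(Measure.pi fun _ => gaussianReal 0 1) := lintegral_mono key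
    _ = _ := by simp

/-! ### Densities from domination by Lebesgue measure -/

/-- A finite measure dominated by `C` times Lebesgue measure has a density bounded by `C`. -/
lemma exists_bounded_density {μ : Measure ℝ} [IsFiniteMeasure μ] {C : ℝ} (hC : 0 ≤ C)
    (h : ∀ E, MeasurableSet E → μ E ≤ ENNReal.ofReal C * volume E) :
    ∃ q : ℝ → ℝ, Measurable q ∧ μ = volume.withDensity (fun t => ENNReal.ofReal (q t)) ∧
      ∀ᵐ t ∂(volume : Measure ℝ), |q t| ≤ C := by
  have hac : μ ≪ volume := by
    refine Measure.AbsolutelyContinuous.mk fun s hs h0 => ?_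
    have := h s hs
    rw [h0, mul_zero] at this
    exact le_antisymm this (zero_le)
  have hle : μ.rnDeriv volume ≤ᵐ[volume] fun _ => ENNReal.ofReal C := by
    refine ae_le_of_forall_setLIntegral_le_of_sigmaFinite (Measure.measurable_rnDeriv _ _)
      fun s hs _ => ?_
    rw [setLIntegral_const]
    exact (Measure.setLIntegral_rnDeriv_le s).trans (h s hs)
  refine ⟨fun t => (μ.rnDeriv volume t).toReal,
    (Measure.measurable_rnDeriv _ _).ennreal_toReal, ?_, ?_⟩
  · rw [← Measure.withDensity_rnDeriv_eq μ volume hac]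
    refine withDensity_congr_ae ?_
    rw [Measure.withDensity_rnDeriv_eq μ volume hac]
    filter_upwards [hle] with t ht
    rw [ENNReal.ofReal_toReal (ne_top_of_le_ne_top ENNReal.ofReal_ne_top ht)]
  · filter_upwards [hle] with t ht
    rw [abs_of_nonneg ENNReal.toReal_nonneg]
    exact ENNReal.toReal_le_of_le_ofReal hC ht

/-! ### Monotonicity of `K` on `A` and the law of the sum -/

/-- Quantitative monotonicity of the cubic `z ↦ a z + (b/2) z² + (a³/3) z³` when `|b| < a²`.
With `β = b / a²` and `q = a (z + w)`, the slope of the chord from `w` to `z` is at least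
`a (1 + β q / 2 + q² / 4)` up to sign, and `1 - |q| / 2 + q² / 4 ≥ 3 / 4`. -/
lemma cubic_increment {a b w z c δ : ℝ} (hc : 0 < c) (hb : |b| < a ^ 2) (ha : 1 / c < |a|)
    (hδ : 0 ≤ δ) (hz : z = w + SignType.sign a * δ) :
    3 / (4 * c) * δ ≤
      (a * z + b / 2 * z ^ 2 + a ^ 3 / 3 * z ^ 3)
        - (a * w + b / 2 * w ^ 2 + a ^ 3 / 3 * w ^ 3) := by
  have hc' : 0 < 1 / c := by positivity
  have hbb := abs_lt.mp hb
  -- The chord slope multiplied by `a`.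
  have hq : 3 / 4 * a ^ 2 ≤
      a * (a + b / 2 * (z + w) + a ^ 3 / 3 * (z ^ 2 + z * w + w ^ 2)) := by
    set q := a * (z + w) with hqdef
    have e1 : a * (a + b / 2 * (z + w) + a ^ 3 / 3 * (z ^ 2 + z * w + w ^ 2))
        = a ^ 2 + b / 2 * q + a ^ 2 * (q ^ 2 / 4) + a ^ 4 * (z - w) ^ 2 / 12 := by
      rw [hqdef]; ring
    have e2 : 0 ≤ a ^ 4 * (z - w) ^ 2 / 12 := by positivity
    have e3 : -(a ^ 2 * |q|) ≤ b * q := by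
      have : |b * q| ≤ a ^ 2 * |q| := by
        rw [abs_mul]; exact mul_le_mul_of_nonneg_right hb.le (abs_nonneg _)
      linarith [neg_abs_le (b * q)]
    have e4 : 0 ≤ a ^ 2 * (|q| - 1) ^ 2 := by positivity
    have e5 : |q| ^ 2 = q ^ 2 := sq_abs q
    rw [e1]
    nlinarith
  have hsign : (SignType.sign a : ℝ) * |a| = a := sign_mul_abs a
  have hapos : 0 < |a| := hc'.trans ha
  have ha2 : |a| * |a| = a ^ 2 := by rw [← sq, sq_abs]
  have hfac : (a * z + b / 2 * z ^ 2 + a ^ 3 / 3 * z ^ 3)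
        - (a * w + b / 2 * w ^ 2 + a ^ 3 / 3 * w ^ 3) =
      (SignType.sign a * δ) * (a + b / 2 * (z + w) + a ^ 3 / 3 * (z ^ 2 + z * w + w ^ 2)) := by
    have : (SignType.sign a : ℝ) * δ = z - w := by rw [hz]; ring
    rw [this]; ring
  set B := a + b / 2 * (z + w) + a ^ 3 / 3 * (z ^ 2 + z * w + w ^ 2)
  have hB : 3 / 4 * |a| ≤ SignType.sign a * B := by
    have : |a| * (3 / 4 * |a|) ≤ |a| * (SignType.sign a * B) := by
      calc |a| * (3 / 4 * |a|) = 3 / 4 * a ^ 2 := by rw [← ha2]; ring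
        _ ≤ a * B := hq
        _ = |a| * (SignType.sign a * B) := by nth_rewrite 1 [← hsign]; ring
    exact le_of_mul_le_mul_left this hapos
  rw [hfac]
  calc 3 / (4 * c) * δ = 3 / 4 * (1 / c) * δ := by field_simp
    _ ≤ (SignType.sign a * B) * δ := by
        refine mul_le_mul_of_nonneg_right (le_trans ?_ hB) hδ
        linarith
    _ = _ := by ring

lemma gaussPi_eq_map (l : ℝ) (hl : 0 < l) (d : ℕ) (x : Fin d → ℝ) :
    gaussPi l d x = (Measure.pi fun _ : Fin d => gaussianReal 0 1).map
      (fun z i => x i + l / √d * z i) := by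
  rw [Measure.pi_map_pi (f := fun i t => x i + l / √d * t) (fun i => by fun_prop), gaussPi]
  congr 1
  ext1 i
  have : (fun t : ℝ => x i + l / √d * t) = (x i + ·) ∘ (l / √d * ·) := rfl
  rw [this, ← Measure.map_map (by fun_prop) (by fun_prop), gaussianReal_map_const_mul,
    gaussianReal_map_const_add]
  congr 1
  · simp
  · ext
    rw [Real.coe_toNNReal _ (by positivity)]
    simp [div_pow]

/-- The law of `Σ K(xᵢ, Yᵢ)` is dominated by Lebesgue measure with a constant depending only on
`l`, `c` and a lower bound `κ` for the proportion of coordinates in `A`. -/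
lemma law_SK_le (ρ : ℝ → ℝ) {l c κ : ℝ} (hl : 0 < l) (hc : 0 < c) (hκ : 0 < κ) (k : ℕ)
    (x : Fin (k + 1) → ℝ)
    (hx : κ * ((k + 1 : ℕ) : ℝ) ≤
      ∑ i ∈ restIdx (k + 1), (Aset ρ c).indicator (fun _ => (1:ℝ)) (x i))
    {E : Set ℝ} (hE : MeasurableSet E) :
    Measure.map (fun Y => SK ρ c (k + 1) x Y) (gaussPi l (k + 1) x) E
      ≤ ENNReal.ofReal (1 / (3 / (4 * c) * (l * √κ))) * volume E := by
  classical
  have hSK : Measurable (fun Y => SK ρ c (k + 1) x Y) := by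
    unfold SK Kf
    fun_prop
  set S := (restIdx (k + 1)).filter fun i => x i ∈ Aset ρ c with hS
  have hcard : ∑ i ∈ restIdx (k + 1), (Aset ρ c).indicator (fun _ => (1:ℝ)) (x i) = S.card := by
    simp only [Set.indicator_apply]
    rw [Finset.sum_boole]
  rw [hcard] at hx
  set N : ℝ := (S.card : ℝ) with hN
  set D : ℝ := ((k + 1 : ℕ) : ℝ) with hD
  have hDpos : 0 < D := by rw [hD]; positivity
  have hNpos : 0 < N := lt_of_lt_of_le (by positivity) hx
  have hsN : 0 < √N := Real.sqrt_pos.mpr hNpos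
  have hsD : 0 < √D := Real.sqrt_pos.mpr hDpos
  set σ : ℝ := l / √D with hσ
  have hσpos : 0 < σ := by positivity
  have hAset : ∀ i ∈ S, |d2l ρ (x i)| < (dl ρ (x i)) ^ 2 ∧ 1 / c < |dl ρ (x i)| := by
    intro i hi
    have := (Finset.mem_filter.mp hi).2
    exact ⟨this.1, this.2.1⟩
  -- The unit vector along which every summand indexed by `S` increases.
  let u : EuclideanSpace ℝ (Fin (k + 1)) :=
    WithLp.toLp 2 fun i => if i ∈ S then (SignType.sign (dl ρ (x i)) : ℝ) / √N else 0
  have hu_apply : ∀ i, u i = if i ∈ S then (SignType.sign (dl ρ (x i)) : ℝ) / √N else 0 :=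
    fun i => rfl
  have hu : ‖u‖ = 1 := by
    rw [EuclideanSpace.norm_eq, Real.sqrt_eq_one]
    have : ∀ i, ‖u i‖ ^ 2 = if i ∈ S then 1 / N else 0 := by
      intro i
      rw [hu_apply, Real.norm_eq_abs, sq_abs]
      split_ifs with hi
      · have ha : dl ρ (x i) ≠ 0 := by
          have := (hAset i hi).2
          exact abs_pos.mp (lt_trans (by positivity) this)
        rw [div_pow, Real.sq_sqrt hNpos.le]
        rcases lt_or_gt_of_ne ha with h | h
        · simp [sign_neg h]
        · simp [sign_pos h]
      · simp
    simp_rw [this]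
    rw [Finset.sum_ite_mem, Finset.univ_inter, Finset.sum_const, nsmul_eq_mul]
    exact mul_one_div_cancel hNpos.ne'
  have hrate : 3 / (4 * c) * (l * √κ) ≤ 3 / (4 * c) * (σ * √N) := by
    refine mul_le_mul_of_nonneg_left ?_ (by positivity)
    have : √κ * √D ≤ √N := by
      rw [← Real.sqrt_mul hκ.le]
      exact Real.sqrt_le_sqrt hx
    calc l * √κ = σ * (√κ * √D) := by rw [hσ]; field_simp
      _ ≤ _ := mul_le_mul_of_nonneg_left this hσpos.le
  have hmain := pi_gaussian_preimage_le
    (F := fun z => SK ρ c (k + 1) x (fun i => x i + σ * z i))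
    (hSK.comp (by fun_prop)) hu (m := 3 / (4 * c) * (l * √κ)) (by positivity) ?_ hE
  · rw [Measure.map_apply hSK hE, gaussPi_eq_map l hl,
      Measure.map_apply (by fun_prop) (hSK hE)]
    exact hmain
  · intro z s t hst
    have hterm : ∀ i ∈ restIdx (k + 1),
        (if i ∈ S then 3 / (4 * c) * (σ * (t - s) / √N) else 0) ≤
          Kf ρ c (x i) (x i + σ * (z i + t * u i)) - Kf ρ c (x i) (x i + σ * (z i + s * u i)) := by
      intro i _
      rw [hu_apply]
      split_ifs with hi
      · have hiA : x i ∈ Aset ρ c := (Finset.mem_filter.mp hi).2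
        have hδ : 0 ≤ σ * (t - s) / √N :=
          div_nonneg (mul_nonneg hσpos.le (by linarith)) hsN.le
        have := cubic_increment (w := σ * (z i + s * ((SignType.sign (dl ρ (x i)) : ℝ) / √N)))
          (z := σ * (z i + t * ((SignType.sign (dl ρ (x i)) : ℝ) / √N)))
          hc (hAset i hi).1 (hAset i hi).2 hδ (by ring)
        simp only [Kf, Set.indicator_of_mem hiA, add_sub_cancel_left, mul_one]
        exact this
      · simp
    have hsum := Finset.sum_le_sum hterm
    have hSsub : restIdx (k + 1) ∩ S = S :=
      Finset.inter_eq_right.mpr (Finset.filter_subset _ _)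
    rw [Finset.sum_ite_mem, hSsub, Finset.sum_const, nsmul_eq_mul,
      Finset.sum_sub_distrib] at hsum
    refine le_trans ?_ hsum
    calc 3 / (4 * c) * (l * √κ) * (t - s) ≤ 3 / (4 * c) * (σ * √N) * (t - s) :=
          mul_le_mul_of_nonneg_right hrate (by linarith)
      _ = √N * √N * (3 / (4 * c) * (σ * (t - s) / √N)) := by field_simp
      _ = N * (3 / (4 * c) * (σ * (t - s) / √N)) := by rw [Real.mul_self_sqrt hNpos.le]

/-- **Lemma.** For any `d ∈ ℕ` and `x ∈ 𝒜_d` the sum `Σ_{i=2}^d K(x_i, Y_i)` possesses a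
density `q_x^d`, and there is a constant `C_K` with `‖q_x^d‖_∞ ≤ C_K` for all `d` and all
`x ∈ 𝒜_d`. -/
theorem stmt10 (ρ : ℝ → ℝ) (hmeas : Measurable ρ) (hpos : ∀ x, 0 < ρ x)
    (hint : ∫ x, ρ x = 1) (hlog : MemS 4 fun x => Real.log (ρ x))
    (htail : SuperExpTails ρ) (l : ℝ) (hl : 0 < l)
    (c : ℝ) (hc : 0 < c) (hA : 0 < ∫ x in Aset ρ c, ρ x)
    (a : ℕ → ℝ) (ha : Sluggish a) :
    ∃ C_K : ℝ, ∀ d : ℕ, ∀ x ∈ Ad ρ c a d,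
      ∃ q : ℝ → ℝ, Measurable q ∧
        Measure.map (fun Y => SK ρ c d x Y) (gaussPi l d x) =
          volume.withDensity (fun t => ENNReal.ofReal (q t)) ∧
        ∀ᵐ t ∂(volume : Measure ℝ), |q t| ≤ C_K := by
  set I := ∫ x in Aset ρ c, ρ x with hI
  set C : ℝ := 1 / (3 / (4 * c) * (l * √(I / 4))) with hC
  have hCnn : 0 ≤ C := by positivity
  refine ⟨C, fun d x hx => ?_⟩
  have h2 := hx.2.1
  -- The set is empty for `d = 0` and `d = 1`, where there are no coordinates to sum over.
  have hd : 2 ≤ d := by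
    by_contra! hd
    have : restIdx d = ∅ := by
      refine Finset.filter_eq_empty_iff.mpr fun i _ => ?_
      have := i.isLt
      omega
    rw [this, Finset.sum_empty, mul_zero] at h2
    linarith
  obtain ⟨k, rfl⟩ : ∃ k, d = k + 1 := ⟨d - 1, by omega⟩
  have hk : (1 : ℝ) ≤ k := by exact_mod_cast (by omega : 1 ≤ k)
  have hx' : I / 4 * ((k + 1 : ℕ) : ℝ) ≤
      ∑ i ∈ restIdx (k + 1), (Aset ρ c).indicator (fun _ => (1:ℝ)) (x i) := by
    push_cast at h2 ⊢
    rw [add_sub_cancel_right, one_div, ← div_eq_inv_mul, lt_div_iff₀ (by linarith)] at h2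
    refine le_trans ?_ h2.le
    nlinarith
  have : IsProbabilityMeasure (gaussPi l (k + 1) x) := by
    unfold gaussPi
    infer_instance
  exact exists_bounded_density hCnn fun E hE =>
    law_SK_le ρ hl hc (by positivity) k x hx' hE
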